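/- arXiv:2506.22713 — 3 statements merged into one kernel-verified Lean document; each statement's English description precedes it below -/
import Mathlib

section
/- Let M ∈ ℂ^{m×d} with d ≤ m have full column rank, and let M = QR be its (unique) QR decomposition, where Q ∈ ℂ^{m×d} has orthonormal columns and R ∈ ℂ^{d×d} is upper triangular with positive real diagonal entries. Partition the columns of M into consecutive blocks M = [M₁, M₂, …, M_s], partition Q conformally as Q = [Q₁, …, Q_s], and let R_{jj} denote the corresponding diagonal blocks of R. Then for every j = 1, …, s, the matrix Y_j := (I_m − Σ_{i<j} Q_i Q_iᴴ) M_j satisfies Y_j = Q_j R_{jj}; in particular, Q_j and R_{jj} are exactly the factors of the unique QR decomposition (with positive diagonal) of Y_j. -/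
/-!
Orthonormality of the columns of `Q` gives `Qᴴ M = R`, so `Q_iᴴ M_j` is the block `R_{ij}`, and
subtracting `∑_{i<j} Q_i Q_iᴴ M_j = ∑_{i<j} Q_i R_{ij}` from `M_j = ∑_i Q_i R_{ij}` leaves
`Q_j R_{jj}`, because `R_{ij} = 0` for `i > j`. The block sums are compared with sums over single
column indices (`sum_lt_succ_boundary`, `sum_blocks_lt`). The remaining claims restrict the
properties of `Q` and `R` to the columns of block `j`.
-/

open Matrix

/-- The embedding of the column indices of the `j`-th consecutive block (with block
boundaries `c 0 ≤ c 1 ≤ ⋯ ≤ c s`) into `Fin d`. -/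
def blockEmb {s d : ℕ} (c : Fin (s + 1) → ℕ) (hmono : Monotone c)
    (hlast : c (Fin.last s) = d) (j : Fin s) :
    Fin (c j.succ - c j.castSucc) → Fin d :=
  fun k => ⟨c j.castSucc + (k : ℕ), by
    have h1 : c j.succ ≤ d := hlast ▸ hmono (Fin.le_last j.succ)
    have h2 := k.isLt
    omega⟩

/-- Appending block `j` to the columns preceding it gives the columns below the boundary
`c j.succ`. -/
lemma sum_lt_succ_boundary {A : Type*} [AddCommMonoid A] {s d : ℕ} (c : Fin (s + 1) → ℕ)
    (hmono : Monotone c) (hlast : c (Fin.last s) = d) (j : Fin s) (f : Fin d → A) :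
    ∑ x : Fin d with x.val < c j.succ, f x =
      ∑ x : Fin d with x.val < c j.castSucc, f x + ∑ k, f (blockEmb c hmono hlast j k) := by
  have hle : c j.castSucc ≤ c j.succ := hmono j.castSucc_lt_succ.le
  have hinj : Function.Injective (blockEmb c hmono hlast j) := by
    intro k l h
    have := congrArg Fin.val h
    simp only [blockEmb] at this
    exact Fin.ext (by omega)
  rw [← Finset.sum_image (f := f) (g := blockEmb c hmono hlast j) hinj.injOn,
    ← Finset.sum_union]
  · congr 1
    ext x
    simp only [Finset.mem_filter, Finset.mem_univ, true_and, Finset.mem_union, Finset.mem_image]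
    constructor
    · intro hx
      by_cases h : (x : ℕ) < c j.castSucc
      · exact Or.inl h
      · refine Or.inr ⟨⟨x - c j.castSucc, by omega⟩, Fin.ext ?_⟩
        simp only [blockEmb]
        omega
    · rintro (h | ⟨k, rfl⟩)
      · omega
      · have := k.isLt
        simp only [blockEmb]
        omega
  · rw [Finset.disjoint_left]
    intro x hx hx'
    obtain ⟨k, -, rfl⟩ := Finset.mem_image.1 hx'
    simp [blockEmb] at hx

/-- Since `c 0 = 0`, the blocks before the boundary `t` partition the columns below `c t`. -/
lemma sum_blocks_lt {A : Type*} [AddCommMonoid A] {s d : ℕ} (c : Fin (s + 1) → ℕ)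
    (hmono : Monotone c) (h0 : c 0 = 0) (hlast : c (Fin.last s) = d) (f : Fin d → A)
    (t : Fin (s + 1)) :
    ∑ i : Fin s with i.castSucc < t, ∑ k, f (blockEmb c hmono hlast i k) =
      ∑ x : Fin d with x.val < c t, f x := by
  induction t using Fin.induction with
  | zero => simp [h0]
  | succ j ih =>
    have hins : (Finset.univ.filter fun i : Fin s => i.castSucc < j.succ) =
        insert j (Finset.univ.filter fun i : Fin s => i.castSucc < j.castSucc) := by
      ext i
      simp only [Finset.mem_filter, Finset.mem_univ, true_and, Finset.mem_insert, Fin.lt_def,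
        Fin.ext_iff, Fin.val_castSucc, Fin.val_succ]
      omega
    rw [hins, Finset.sum_insert (by simp), ih, sum_lt_succ_boundary c hmono hlast j f, add_comm]

/-- Block compatibility of the QR decomposition: if `M = QR` is the unique QR decomposition
(`Q` with orthonormal columns, `R` upper triangular with positive real diagonal) of a
full-column-rank matrix `M ∈ ℂ^{m×d}` (`d ≤ m`), and the columns are partitioned into
consecutive blocks with boundaries `0 = c 0 ≤ c 1 ≤ ⋯ ≤ c s = d`, then for every block `j`,
`Y_j := (I − ∑_{i<j} Q_i Q_iᴴ) M_j = Q_j R_{jj}`; moreover `Q_j` has orthonormal columns and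
`R_{jj}` is upper triangular with positive real diagonal, so they are the factors of the
unique QR decomposition of `Y_j`. -/
theorem blockwise_qr {m d s : ℕ} (hdm : d ≤ m)
    (M Q : Matrix (Fin m) (Fin d) ℂ) (R : Matrix (Fin d) (Fin d) ℂ)
    (hrank : M.rank = d)
    (hQ : Qᴴ * Q = 1)
    (hRtri : ∀ i j : Fin d, (j : ℕ) < (i : ℕ) → R i j = 0)
    (hRdiag : ∀ i : Fin d, 0 < (R i i).re ∧ (R i i).im = 0)
    (hQR : M = Q * R)
    (c : Fin (s + 1) → ℕ) (hmono : Monotone c) (h0 : c 0 = 0)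
    (hlast : c (Fin.last s) = d) (j : Fin s) :
    (1 - ∑ i ∈ Finset.univ.filter (fun i : Fin s => i < j),
          Q.submatrix id (blockEmb c hmono hlast i) *
            (Q.submatrix id (blockEmb c hmono hlast i))ᴴ) *
        M.submatrix id (blockEmb c hmono hlast j)
      = Q.submatrix id (blockEmb c hmono hlast j) *
          R.submatrix (blockEmb c hmono hlast j) (blockEmb c hmono hlast j) ∧
    (Q.submatrix id (blockEmb c hmono hlast j))ᴴ *
        Q.submatrix id (blockEmb c hmono hlast j) = 1 ∧
    (∀ a b : Fin (c j.succ - c j.castSucc), (b : ℕ) < (a : ℕ) →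
      R.submatrix (blockEmb c hmono hlast j) (blockEmb c hmono hlast j) a b = 0) ∧
    (∀ a : Fin (c j.succ - c j.castSucc), 0 < (R.submatrix (blockEmb c hmono hlast j) (blockEmb c hmono hlast j) a a).re ∧
      (R.submatrix (blockEmb c hmono hlast j) (blockEmb c hmono hlast j) a a).im = 0) := by
  have hinj : Function.Injective (blockEmb c hmono hlast j) := by
    intro k l h
    have := congrArg Fin.val h
    simp only [blockEmb] at this
    exact Fin.ext (by omega)
  refine ⟨?_, ?_, ?_, fun a => hRdiag _⟩
  · have hM : M.submatrix id (blockEmb c hmono hlast j) =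
        Q * R.submatrix id (blockEmb c hmono hlast j) := by
      rw [hQR]; rfl
    -- Orthonormality turns the coefficients `Q_iᴴ M_j` into the off-diagonal blocks `R_{ij}`.
    have hcoef (i : Fin s) : (Q.submatrix id (blockEmb c hmono hlast i))ᴴ *
        M.submatrix id (blockEmb c hmono hlast j) =
        R.submatrix (blockEmb c hmono hlast i) (blockEmb c hmono hlast j) := by
      have h : Qᴴ * M = R := by rw [hQR, ← Matrix.mul_assoc, hQ, Matrix.one_mul]
      conv_rhs => rw [← h]
      rfl
    rw [Matrix.sub_mul, Matrix.one_mul, Matrix.sum_mul]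
    simp only [Matrix.mul_assoc, hcoef]
    rw [sub_eq_iff_eq_add', hM]
    ext a b
    simp only [Matrix.add_apply, Matrix.sum_apply, Matrix.mul_apply, Matrix.submatrix_apply, id]
    have h1 := sum_blocks_lt c hmono h0 hlast
      (fun x => Q a x * R x (blockEmb c hmono hlast j b)) j.castSucc
    simp only [Fin.castSucc_lt_castSucc_iff] at h1
    rw [h1, ← sum_lt_succ_boundary c hmono hlast j
      (fun x => Q a x * R x (blockEmb c hmono hlast j b))]
    symm
    -- Rows of `R` past block `j` vanish in the columns of block `j`, by triangularity.
    refine Finset.sum_subset (Finset.subset_univ _) ?_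
    intro x _ hx
    simp only [Finset.mem_filter, Finset.mem_univ, true_and, not_lt] at hx
    have hb := b.isLt
    rw [hRtri _ _ (by simp only [blockEmb]; omega), mul_zero]
  · have h : (Qᴴ * Q).submatrix (blockEmb c hmono hlast j) (blockEmb c hmono hlast j) = 1 := by
      rw [hQ]
      exact Matrix.submatrix_one _ hinj
    exact h
  · intro a b hab
    exact hRtri _ _ (by simp only [blockEmb]; omega)
end

section
/- Let m ≥ n ≥ 1, let A ∈ ℂ^{m×n} have singular values σ₁ ≥ σ₂ ≥ ⋯ ≥ σ_n ≥ 0, and fix 1 ≤ r < n with σ_r > 0. Let A = Ũ Σ Ṽᴴ be a reduced singular value decomposition with Ũ ∈ ℂ^{m×n} having orthonormal columns, Ṽ ∈ ℂ^{n×n} unitary, and Σ = diag(σ₁, …, σ_n); write Ṽ = [Ṽ_r, Ṽ₀] with Ṽ_r ∈ ℂ^{n×r}, and set Σ_r = diag(σ₁,…,σ_r), Σ₀ = diag(σ_{r+1},…,σ_n). Let Ω ∈ ℂ^{n×d}, set Λ₁ = Ṽ_rᴴ Ω ∈ ℂ^{r×d} and Λ₂ = Ṽ₀ᴴ Ω ∈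 ℂ^{(n−r)×d}, and suppose there exists X ∈ ℂ^{d×r} with Λ₁ X = I_r. Fix an integer τ ≥ 0, let B = (AAᴴ)^τ A Ω, and let P ∈ ℂ^{m×m} be the orthogonal projection matrix onto the column space of B. Then ‖A − PA‖_F² ≤ α^{4τ} ‖Σ₀ Λ₂ X‖_F² + ‖Σ₀‖_F², where α = σ_{r+1}/σ_r and ‖·‖_F denotes the Frobenius norm. -/
/-!
Write `G = Ṽᴴ Ω X`; its top `r × r` block is the identity because `X` is a right inverse of
`Λ₁`, and its bottom block is `Λ₂ X`. Since `(A Aᴴ)^τ A = Ũ Σ^(2τ+1) Ṽᴴ`, the choice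
`C = X Σ_r^(-2τ) Ṽ_rᴴ` gives `A - B C = Ũ N Ṽᴴ`, where, in block form, `N = [0, 0; -F, Σ₀]` and
`F = Σ₀^(2τ+1) Λ₂ X Σ_r^(-2τ)`. As `P B = B`, the error `A - P A` equals `(1 - P) (A - B C)`,
so its Frobenius norm is at most that of `N`. Finally each entry of `F` is bounded by `α^(2τ)`
times the corresponding entry of `Σ₀ Λ₂ X`.
-/

open Matrix

/-- The Frobenius norm of a complex matrix. -/
noncomputable def frobNorm {α β : Type*} [Fintype α] [Fintype β] (M : Matrix α β ℂ) : ℝ :=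
  Real.sqrt (∑ i, ∑ j, ‖M i j‖ ^ 2)

lemma frobNorm_sq {α β : Type*} [Fintype α] [Fintype β] (M : Matrix α β ℂ) :
    frobNorm M ^ 2 = ∑ i, ∑ j, ‖M i j‖ ^ 2 :=
  Real.sq_sqrt (by positivity)

lemma frobNorm_sq_eq_trace {α β : Type*} [Fintype α] [Fintype β] (M : Matrix α β ℂ) :
    ((frobNorm M ^ 2 : ℝ) : ℂ) = (Mᴴ * M).trace := by
  rw [frobNorm_sq, Finset.sum_comm]
  simp [Matrix.trace, Matrix.mul_apply, Complex.conj_mul']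

lemma frobNorm_sq_isometry_mul_unitary {m n : ℕ} (U : Matrix (Fin m) (Fin n) ℂ)
    (V N : Matrix (Fin n) (Fin n) ℂ) (hU : Uᴴ * U = 1) (hV : Vᴴ * V = 1) :
    frobNorm (U * N * Vᴴ) ^ 2 = frobNorm N ^ 2 := by
  have h : ((frobNorm (U * N * Vᴴ) ^ 2 : ℝ) : ℂ) = ((frobNorm N ^ 2 : ℝ) : ℂ) := by
    rw [frobNorm_sq_eq_trace, frobNorm_sq_eq_trace]
    have e : (U * N * Vᴴ)ᴴ * (U * N * Vᴴ) = V * (Nᴴ * (Uᴴ * U) * N * Vᴴ) := by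
      simp only [conjTranspose_mul, conjTranspose_conjTranspose, Matrix.mul_assoc]
    rw [e, hU, Matrix.trace_mul_comm, Matrix.mul_assoc _ Vᴴ V, hV, Matrix.mul_one, Matrix.mul_one]
  exact_mod_cast h

/-- Pythagoras: `‖M‖² = ‖P M‖² + ‖M - P M‖²`, hence the complementary projection contracts. -/
lemma frobNorm_sq_sub_proj_le {m n : ℕ} (P : Matrix (Fin m) (Fin m) ℂ)
    (M : Matrix (Fin m) (Fin n) ℂ) (hP1 : Pᴴ = P) (hP2 : P * P = P) :
    frobNorm (M - P * M) ^ 2 ≤ frobNorm M ^ 2 := by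
  have h : ((frobNorm (M - P * M) ^ 2 + frobNorm (P * M) ^ 2 : ℝ) : ℂ)
      = ((frobNorm M ^ 2 : ℝ) : ℂ) := by
    rw [Complex.ofReal_add, frobNorm_sq_eq_trace, frobNorm_sq_eq_trace, frobNorm_sq_eq_trace,
      ← Matrix.trace_add]
    have e : P * (P * M) = P * M := by rw [← Matrix.mul_assoc, hP2]
    congr 1
    simp only [conjTranspose_sub, conjTranspose_mul, hP1, Matrix.sub_mul, Matrix.mul_sub,
      Matrix.mul_assoc, e]
    abel
  have h' : frobNorm (M - P * M) ^ 2 + frobNorm (P * M) ^ 2 = frobNorm M ^ 2 := by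
    exact_mod_cast h
  nlinarith [sq_nonneg (frobNorm (P * M))]

lemma proj_mul_of_range_eq {m d : ℕ} (P : Matrix (Fin m) (Fin m) ℂ)
    (B : Matrix (Fin m) (Fin d) ℂ) (hP2 : P * P = P)
    (h : LinearMap.range P.mulVecLin = LinearMap.range B.mulVecLin) : P * B = B := by
  apply Matrix.ext_of_mulVec_single
  intro j
  have hj : B *ᵥ Pi.single j 1 ∈ LinearMap.range P.mulVecLin := by
    rw [h]; exact ⟨_, rfl⟩
  obtain ⟨w, hw⟩ := hj
  rw [Matrix.mulVecLin_apply] at hw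
  rw [← Matrix.mulVec_mulVec, ← hw, Matrix.mulVec_mulVec, hP2]

lemma sum_fin_split {n r : ℕ} (hrn : r < n) (f : Fin n → ℝ) :
    ∑ i, f i = ∑ a : Fin r, f (Fin.castLE hrn.le a)
      + ∑ k : Fin (n - r), f ⟨r + (k : ℕ), by have := k.isLt; omega⟩ := by
  rw [← Equiv.sum_comp (finCongr (show r + (n - r) = n by omega)) f, Fin.sum_univ_add]
  rfl

lemma power_mul_svd {m n : ℕ} (U : Matrix (Fin m) (Fin n) ℂ) (V : Matrix (Fin n) (Fin n) ℂ)
    (σ : Fin n → ℝ) (hU : Uᴴ * U = 1) (hV : Vᴴ * V = 1) (A : Matrix (Fin m) (Fin n) ℂ)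
    (hA : A = U * Matrix.diagonal (fun i => (σ i : ℂ)) * Vᴴ) (τ : ℕ) :
    (A * Aᴴ) ^ τ * A = U * Matrix.diagonal (fun i => (σ i : ℂ) ^ (2 * τ + 1)) * Vᴴ := by
  induction τ with
  | zero => simpa using hA
  | succ t ih =>
    have hAH : Aᴴ = V * Matrix.diagonal (fun i => (σ i : ℂ)) * Uᴴ := by
      rw [hA]
      simp [conjTranspose_mul, Matrix.mul_assoc, diagonal_conjTranspose, Pi.star_def]
    have e : ∀ D₁ D₂ D₃ : Matrix (Fin n) (Fin n) ℂ,
        U * D₁ * Vᴴ * (V * D₂ * Uᴴ) * (U * D₃ * Vᴴ) = U * (D₁ * D₂ * D₃) * Vᴴ := by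
      intro D₁ D₂ D₃
      calc _ = U * D₁ * (Vᴴ * V) * D₂ * (Uᴴ * U) * D₃ * Vᴴ := by
            simp only [Matrix.mul_assoc]
        _ = _ := by simp only [hU, hV, Matrix.mul_one, Matrix.mul_assoc]
    rw [pow_succ', Matrix.mul_assoc, ih, hAH, hA, e, diagonal_mul_diagonal, diagonal_mul_diagonal]
    congr 3
    ext i
    ring_nf

/-- Deterministic error bound for the randomized low-rank approximation with power
(subspace) iteration: if `A = Ũ Σ Ṽᴴ` is a reduced SVD, `Λ₁ = Ṽ_rᴴ Ω` has a right inverse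
`X`, `B = (AAᴴ)^τ A Ω` and `P` is the orthogonal projection onto the column space of `B`,
then `‖A − PA‖_F² ≤ α^{4τ} ‖Σ₀ Λ₂ X‖_F² + ‖Σ₀‖_F²` with `α = σ_{r+1}/σ_r`. -/
theorem lowrank_approx_error_bound {m n d : ℕ} (hnm : n ≤ m) (hn1 : 1 ≤ n)
    (A : Matrix (Fin m) (Fin n) ℂ) (σ : Fin n → ℝ)
    (hσanti : Antitone σ) (hσnonneg : ∀ i, 0 ≤ σ i)
    (r : ℕ) (hr1 : 1 ≤ r) (hrn : r < n)
    (hσr : 0 < σ ⟨r - 1, by omega⟩)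
    (Ut : Matrix (Fin m) (Fin n) ℂ) (Vt : Matrix (Fin n) (Fin n) ℂ)
    (hUt : Utᴴ * Ut = 1) (hVt : Vt ∈ Matrix.unitaryGroup (Fin n) ℂ)
    (hSVD : A = Ut * Matrix.diagonal (fun i => (σ i : ℂ)) * Vtᴴ)
    (Ω : Matrix (Fin n) (Fin d) ℂ) (X : Matrix (Fin d) (Fin r) ℂ)
    (hX : (Vt.submatrix id (Fin.castLE hrn.le))ᴴ * Ω * X = 1)
    (τ : ℕ) (P : Matrix (Fin m) (Fin m) ℂ)
    (hP1 : Pᴴ = P) (hP2 : P * P = P)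
    (hPrange : LinearMap.range P.mulVecLin
      = LinearMap.range ((A * Aᴴ) ^ τ * A * Ω).mulVecLin) :
    frobNorm (A - P * A) ^ 2
      ≤ (σ ⟨r, hrn⟩ / σ ⟨r - 1, by omega⟩) ^ (4 * τ) *
          frobNorm
            ((Matrix.diagonal fun k : Fin (n - r) =>
                ((σ ⟨r + (k : ℕ), by have := k.isLt; omega⟩ : ℝ) : ℂ)) *
              ((Vt.submatrix id fun k : Fin (n - r) =>
                  (⟨r + (k : ℕ), by have := k.isLt; omega⟩ : Fin n))ᴴ * Ω) * X) ^ 2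
        + frobNorm
            (Matrix.diagonal fun k : Fin (n - r) =>
              ((σ ⟨r + (k : ℕ), by have := k.isLt; omega⟩ : ℝ) : ℂ)) ^ 2 := by
  set s : Fin r → ℂ := fun a => (σ (Fin.castLE hrn.le a) : ℂ) with hs
  have hspos : ∀ a : Fin r, σ ⟨r - 1, by omega⟩ ≤ σ (Fin.castLE hrn.le a) := fun a =>
    hσanti (by rw [Fin.le_def]; have := a.isLt; simp; omega)
  have hs0 : ∀ a, s a ≠ 0 := fun a => by
    have := hσr.trans_le (hspos a)
    simp only [hs]; exact_mod_cast this.ne'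
  have hV : Vtᴴ * Vt = 1 := by
    simpa [star_eq_conjTranspose] using (Matrix.mem_unitaryGroup_iff'.mp hVt)
  set B := (A * Aᴴ) ^ τ * A * Ω with hB
  have hPB : P * B = B := proj_mul_of_range_eq P B hP2 hPrange
  set G : Matrix (Fin n) (Fin r) ℂ := Vtᴴ * Ω * X with hG
  -- `J = [I_r, 0]`, so that `J Ṽᴴ = Ṽ_rᴴ`
  set J : Matrix (Fin r) (Fin n) ℂ :=
    (1 : Matrix (Fin n) (Fin n) ℂ).submatrix (Fin.castLE hrn.le) id with hJ
  set S : Matrix (Fin r) (Fin r) ℂ := Matrix.diagonal fun a => (s a ^ (2 * τ))⁻¹ with hS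
  set N : Matrix (Fin n) (Fin n) ℂ := Matrix.diagonal (fun i => (σ i : ℂ))
    - Matrix.diagonal (fun i => (σ i : ℂ) ^ (2 * τ + 1)) * G * S * J with hN
  have hABC : A - B * (X * S * J * Vtᴴ) = Ut * N * Vtᴴ := by
    rw [hB, power_mul_svd Ut Vt σ hUt hV A hSVD τ, hN, Matrix.mul_sub, Matrix.sub_mul, ← hSVD, hG]
    simp only [Matrix.mul_assoc]
  have herr : A - P * A = (Ut * N * Vtᴴ) - P * (Ut * N * Vtᴴ) := by
    rw [← hABC, Matrix.mul_sub, ← Matrix.mul_assoc P B, hPB]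
    abel
  have hle : frobNorm (A - P * A) ^ 2 ≤ frobNorm N ^ 2 := by
    rw [herr, ← frobNorm_sq_isometry_mul_unitary Ut Vt N hUt hV]
    exact frobNorm_sq_sub_proj_le P _ hP1 hP2
  refine hle.trans ?_
  have hGtop : ∀ a b : Fin r, G (Fin.castLE hrn.le a) b = (1 : Matrix (Fin r) (Fin r) ℂ) a b := by
    intro a b
    rw [← hX]; rfl
  have hGbot : ∀ (k : Fin (n - r)) (b : Fin r),
      G ⟨r + (k : ℕ), by have := k.isLt; omega⟩ b =
        ((Vt.submatrix id fun k : Fin (n - r) =>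
          (⟨r + (k : ℕ), by have := k.isLt; omega⟩ : Fin n))ᴴ * Ω * X) k b := by
    intro k b
    rfl
  have hNl : ∀ i (b : Fin r), N i (Fin.castLE hrn.le b) =
      (if i = Fin.castLE hrn.le b then (σ i : ℂ) else 0)
        - (σ i : ℂ) ^ (2 * τ + 1) * G i b * (s b ^ (2 * τ))⁻¹ := by
    intro i b
    rw [hN, Matrix.sub_apply, Matrix.diagonal_apply, Matrix.mul_apply, Finset.sum_eq_single b]
    · simp [hJ, hS, Matrix.mul_diagonal, Matrix.diagonal_mul, Matrix.one_apply]
    · intro c _ hc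
      simp [hJ, hc]
    · simp
  have hNr : ∀ i (k : Fin (n - r)), N i ⟨r + (k : ℕ), by have := k.isLt; omega⟩ =
      if i = ⟨r + (k : ℕ), by have := k.isLt; omega⟩ then (σ i : ℂ) else 0 := by
    intro i k
    rw [hN, Matrix.sub_apply, Matrix.diagonal_apply, Matrix.mul_apply, Finset.sum_eq_zero, sub_zero]
    intro c _
    have : Fin.castLE hrn.le c ≠ ⟨r + (k : ℕ), by have := k.isLt; omega⟩ := by
      intro h; have := Fin.ext_iff.mp h; have := c.isLt; simp at *; omega
    simp [hJ, this]
  have hTL : ∀ a b : Fin r, N (Fin.castLE hrn.le a) (Fin.castLE hrn.le b) = 0 := by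
    intro a b
    rw [hNl, hGtop]
    by_cases h : a = b
    · subst h
      have := hs0 a
      simp only [if_true, Matrix.one_apply_eq]
      change s a - s a ^ (2 * τ + 1) * 1 * (s a ^ (2 * τ))⁻¹ = 0
      field_simp
      ring
    · simp [h]
  have hTR : ∀ (a : Fin r) (k : Fin (n - r)),
      N (Fin.castLE hrn.le a) ⟨r + (k : ℕ), by have := k.isLt; omega⟩ = 0 := by
    intro a k
    rw [hNr, if_neg]
    intro h; have := Fin.ext_iff.mp h; have := a.isLt; simp at *; omega
  rw [frobNorm_sq, frobNorm_sq, frobNorm_sq, sum_fin_split hrn]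
  simp only [sum_fin_split hrn (fun j => ‖N _ j‖ ^ 2), hTL, hTR, norm_zero, ne_eq,
    OfNat.ofNat_ne_zero, not_false_eq_true, zero_pow, Finset.sum_const_zero, add_zero, zero_add]
  rw [Finset.sum_add_distrib, Finset.mul_sum]
  refine add_le_add (Finset.sum_le_sum fun k _ => ?_) (le_of_eq ?_)
  · rw [Finset.mul_sum]
    refine Finset.sum_le_sum fun b _ => ?_
    rw [hNl, if_neg (by
      intro h; have := Fin.ext_iff.mp h; have := b.isLt; simp at *; omega), hGbot,
      Matrix.mul_assoc (Matrix.diagonal _), Matrix.diagonal_mul, zero_sub, norm_neg]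
    set g := ((Vt.submatrix id fun k : Fin (n - r) =>
          (⟨r + (k : ℕ), by have := k.isLt; omega⟩ : Fin n))ᴴ * Ω * X) k b
    set t := σ ⟨r + (k : ℕ), by have := k.isLt; omega⟩ with ht
    have ht0 : 0 ≤ t := hσnonneg _
    have htle : t ≤ σ ⟨r, hrn⟩ := hσanti (by rw [Fin.le_def]; simp)
    have hb := hspos b
    have hb0 := hσr.trans_le hb
    have hratio : t / σ (Fin.castLE hrn.le b) ≤ σ ⟨r, hrn⟩ / σ ⟨r - 1, by omega⟩ :=
      div_le_div₀ (hσnonneg _) htle hσr hb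
    have hnorm : ‖(t : ℂ) ^ (2 * τ + 1) * g * (s b ^ (2 * τ))⁻¹‖ ^ 2
        = (t / σ (Fin.castLE hrn.le b)) ^ (4 * τ) * ‖(t : ℂ) * g‖ ^ 2 := by
      simp only [hs, norm_mul, norm_pow, norm_inv, Complex.norm_real, Real.norm_eq_abs,
        abs_of_nonneg ht0, abs_of_pos hb0]
      rw [div_pow]
      field_simp
      ring
    rw [hnorm]
    gcongr
  · refine Finset.sum_congr rfl fun k _ => Finset.sum_congr rfl fun l _ => ?_
    rw [hNr, Matrix.diagonal_apply]
    simp [Fin.ext_iff]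
end

section
/- Let r, p ≥ 1, let S ∈ ℂ^{p×r}, and let B = [I_r; S] ∈ ℂ^{(r+p)×r} be the vertical concatenation of the identity and S, with orthogonal projection matrix P_B = B(BᴴB)⁻¹Bᴴ onto the column space of B. Let Σ ∈ ℂ^{(r+p)×(r+p)} be block diagonal, Σ = diag(Σ_r, Σ₀) with Σ_r ∈ ℂ^{r×r} and Σ₀ ∈ ℂ^{p×p}. Then tr(Σᴴ(I_{r+p} − P_B)Σ) ≤ ‖S Σ_r‖_F² + ‖Σ₀‖_F², where ‖·‖_F denotes the Frobenius norm and tr the trace. -/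
/-! Put `B = [I; S]` and `Q = I - P_B`. Since `[Σ_r; 0] = B Σ_r - [0; S Σ_r]`, the block diagonal matrix
`Σ` differs from `N = [0, 0; -S Σ_r, Σ₀]` by a matrix of the form `B X`. As `Q B = 0` and
`Bᴴ Q = 0`, this gives `Σᴴ Q Σ = Nᴴ Q N = Nᴴ N - Nᴴ P_B N`. The matrix `P_B` is positive
semidefinite, so the trace is at most `tr (Nᴴ N) = ‖S Σ_r‖_F² + ‖Σ₀‖_F²`.
-/

open Matrix
open scoped ComplexOrder

theorem trace_conjTranspose_mul_self_eq_frobNorm_sq {α β : Type*} [Fintype α] [Fintype β]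
    (M : Matrix α β ℂ) : (Mᴴ * M).trace = ((frobNorm M ^ 2 : ℝ) : ℂ) := by
  rw [frobNorm, Real.sq_sqrt (by positivity), Finset.sum_comm]
  simp only [Matrix.trace, Matrix.diag_apply, Matrix.mul_apply, Matrix.conjTranspose_apply]
  push_cast
  refine Finset.sum_congr rfl fun j _ => Finset.sum_congr rfl fun i _ => ?_
  exact Complex.conj_mul' (M i j)

/-- The Gram matrix `Bᴴ B = I + Sᴴ S` is positive definite, hence invertible. -/
theorem posDef_gram_fromRows_one {r p : ℕ} (S : Matrix (Fin p) (Fin r) ℂ) :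
    ((Matrix.fromRows (1 : Matrix (Fin r) (Fin r) ℂ) S)ᴴ *
      Matrix.fromRows (1 : Matrix (Fin r) (Fin r) ℂ) S).PosDef := by
  rw [Matrix.conjTranspose_fromRows_eq_fromCols_conjTranspose, Matrix.fromCols_mul_fromRows,
    Matrix.conjTranspose_one, Matrix.one_mul]
  exact Matrix.PosDef.one.add_posSemidef (Matrix.posSemidef_conjTranspose_mul_self S)

/-- Compressing the complementary projection `I - P_B` by `B X + N` depends only on `N`, and dropping
the positive semidefinite term `Nᴴ P_B N` can only increase the trace. -/
theorem trace_compl_proj_le {m n k : Type*} [Fintype m] [Fintype n] [Fintype k]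
    [DecidableEq m] [DecidableEq n] (B : Matrix m n ℂ) (hB : (Bᴴ * B).PosDef)
    (X : Matrix n k ℂ) (N : Matrix m k ℂ) :
    ((B * X + N)ᴴ * (1 - B * (Bᴴ * B)⁻¹ * Bᴴ) * (B * X + N)).trace ≤ (Nᴴ * N).trace := by
  have hu : IsUnit (Bᴴ * B).det := (Matrix.isUnit_iff_isUnit_det _).mp hB.isUnit
  have hQB : (1 - B * (Bᴴ * B)⁻¹ * Bᴴ) * B = 0 := by
    rw [Matrix.sub_mul, Matrix.one_mul, Matrix.mul_assoc, Matrix.mul_assoc,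
      Matrix.nonsing_inv_mul _ hu, Matrix.mul_one, sub_self]
  have hBQ : Bᴴ * (1 - B * (Bᴴ * B)⁻¹ * Bᴴ) = 0 := by
    rw [Matrix.mul_sub, Matrix.mul_one, ← Matrix.mul_assoc, ← Matrix.mul_assoc,
      Matrix.mul_nonsing_inv _ hu, Matrix.one_mul, sub_self]
  have hred : (B * X + N)ᴴ * (1 - B * (Bᴴ * B)⁻¹ * Bᴴ) * (B * X + N)
      = Nᴴ * N - (Bᴴ * N)ᴴ * (Bᴴ * B)⁻¹ * (Bᴴ * N) := by
    calc _ = Nᴴ * (1 - B * (Bᴴ * B)⁻¹ * Bᴴ) * (B * X + N) := by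
            rw [Matrix.conjTranspose_add, Matrix.conjTranspose_mul, Matrix.add_mul,
              Matrix.mul_assoc, hBQ, Matrix.mul_zero, zero_add]
      _ = Nᴴ * (1 - B * (Bᴴ * B)⁻¹ * Bᴴ) * N := by
            rw [Matrix.mul_assoc, Matrix.mul_add, ← Matrix.mul_assoc _ B X, hQB,
              Matrix.zero_mul, zero_add, ← Matrix.mul_assoc]
      _ = _ := by
            rw [Matrix.conjTranspose_mul, Matrix.conjTranspose_conjTranspose]
            simp only [Matrix.mul_sub, Matrix.sub_mul, Matrix.mul_one, Matrix.mul_assoc]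
  rw [hred, Matrix.trace_sub]
  exact sub_le_self _ (hB.inv.posSemidef.conjTranspose_mul_mul_same (Bᴴ * N)).trace_nonneg

/-- For `B = [I_r; S]` with orthogonal projection `P_B = B (BᴴB)⁻¹ Bᴴ` onto its column
space, and block diagonal `Σ = diag(Σ_r, Σ₀)`, one has
`tr(Σᴴ (I − P_B) Σ) ≤ ‖S Σ_r‖_F² + ‖Σ₀‖_F²`. -/
theorem trace_proj_complement_le {r p : ℕ} (hr : 1 ≤ r) (hp : 1 ≤ p)
    (S : Matrix (Fin p) (Fin r) ℂ)
    (Sr : Matrix (Fin r) (Fin r) ℂ) (S0 : Matrix (Fin p) (Fin p) ℂ) :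
    ((Matrix.fromBlocks Sr 0 0 S0)ᴴ *
        ((1 : Matrix (Fin r ⊕ Fin p) (Fin r ⊕ Fin p) ℂ) -
          Matrix.fromRows (1 : Matrix (Fin r) (Fin r) ℂ) S *
            ((Matrix.fromRows (1 : Matrix (Fin r) (Fin r) ℂ) S)ᴴ *
              Matrix.fromRows (1 : Matrix (Fin r) (Fin r) ℂ) S)⁻¹ *
            (Matrix.fromRows (1 : Matrix (Fin r) (Fin r) ℂ) S)ᴴ) *
        Matrix.fromBlocks Sr 0 0 S0).trace
      ≤ ((frobNorm (S * Sr) ^ 2 + frobNorm S0 ^ 2 : ℝ) : ℂ) := by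
  have hdecomp : Matrix.fromBlocks Sr 0 0 S0
      = Matrix.fromRows (1 : Matrix (Fin r) (Fin r) ℂ) S *
          Matrix.fromCols Sr (0 : Matrix (Fin r) (Fin p) ℂ)
        + Matrix.fromBlocks 0 0 (-(S * Sr)) S0 := by
    rw [Matrix.fromRows_mul_fromCols, Matrix.fromBlocks_add]
    simp
  rw [hdecomp]
  refine (trace_compl_proj_le _ (posDef_gram_fromRows_one S) _ _).trans_eq ?_
  rw [Matrix.fromBlocks_conjTranspose, Matrix.fromBlocks_multiply,
    Complex.ofReal_add, ← trace_conjTranspose_mul_self_eq_frobNorm_sq,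
    ← trace_conjTranspose_mul_self_eq_frobNorm_sq]
  simp [Matrix.trace]
end
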